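/- arXiv:2310.17229 — 4 statements merged into one kernel-verified Lean document; each statement's English description precedes it below -/
import Mathlib

section
/- (Main theorem, characterization of the exactness cone.) Assume X is nonempty and compact. For every f ∈ ℝ[x]_d, f belongs to the exactness cone F(g)^r_d if and only if there exists x̂ ∈ X such that f(x̂) = v(f) and f − f(x̂) ∈ Q(g)^r_d. In other words, F(g)^r_d is the set of polynomials of the form v(f) + f⁰ where f⁰ ∈ Q(g)^r_d vanishes at some point x̂ ∈ X (which is then a global minimizer of f on X). -/
open MvPolynomial

/-- A multivariate polynomial is a sum of squares (SOS). -/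
def IsSOS {n : ℕ} (p : MvPolynomial (Fin n) ℝ) : Prop :=
  ∃ (k : ℕ) (q : Fin k → MvPolynomial (Fin n) ℝ), p = ∑ i, (q i) ^ 2

/-- The extended family of constraint polynomials, with `g₀ := 1`. -/
noncomputable def gext {n m : ℕ} (g : Fin m → MvPolynomial (Fin n) ℝ) : Fin (m + 1) → MvPolynomial (Fin n) ℝ :=
  Fin.cons 1 g

/-- The truncated quadratic module `Q(g)^r_d`, with `g₀ := 1`. -/
def Qmod {n m : ℕ} (g : Fin m → MvPolynomial (Fin n) ℝ) (r d : ℕ) :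
    Set (MvPolynomial (Fin n) ℝ) :=
  {p | p.totalDegree ≤ d ∧
    ∃ s : Fin (m + 1) → MvPolynomial (Fin n) ℝ,
      (∀ i, IsSOS (s i)) ∧
      (∀ i, (s i * gext g i).totalDegree ≤ 2 * r) ∧
      p = ∑ i, s i * gext g i}

/-- The basic semialgebraic set `X = {x ∈ ℝⁿ : gᵢ(x) ≥ 0, i = 1,…,m}`. -/
def semiSetX {n m : ℕ} (g : Fin m → MvPolynomial (Fin n) ℝ) : Set (Fin n → ℝ) :=
  {x | ∀ i, 0 ≤ eval x (g i)}

/-- The moment relaxation `R(g)^r_d`: linear functionals nonnegative on `Q(g)^r_d`. -/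
def Rmom {n m : ℕ} (g : Fin m → MvPolynomial (Fin n) ℝ) (r d : ℕ) :
    Set (MvPolynomial (Fin n) ℝ →ₗ[ℝ] ℝ) :=
  {ℓ | ∀ q ∈ Qmod g r d, 0 ≤ ℓ q}

/-- The optimal value `v(f) = inf_{x ∈ X} f(x)` of the POP. -/
noncomputable def vPOP {n m : ℕ} (g : Fin m → MvPolynomial (Fin n) ℝ)
    (f : MvPolynomial (Fin n) ℝ) : ℝ :=
  sInf ((fun x => eval x f) '' semiSetX g)

/-- The relaxed value `v^r(f) = sup {v : f - v ∈ Q(g)^r_d}`. -/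
noncomputable def vRel {n m : ℕ} (g : Fin m → MvPolynomial (Fin n) ℝ) (r d : ℕ)
    (f : MvPolynomial (Fin n) ℝ) : ℝ :=
  sSup {w : ℝ | f - C w ∈ Qmod g r d}

/-- The exactness cone `F(g)^r_d`. -/
def Fcone {n m : ℕ} (g : Fin m → MvPolynomial (Fin n) ℝ) (r d : ℕ) :
    Set (MvPolynomial (Fin n) ℝ) :=
  {f | f.totalDegree ≤ d ∧
    ∃ ℓ ∈ Rmom g r d, ∃ v : ℝ,
      ℓ 1 = 1 ∧ ℓ f = v ∧ v = vPOP g f ∧ f - C v ∈ Qmod g r d}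

/-- Main theorem: for `X` nonempty and compact, a polynomial
`f ∈ ℝ[x]_d` belongs to the exactness cone `F(g)^r_d` if and only if there is a point
`xhat ∈ X` with `f(xhat) = v(f)` (a global minimizer) such that `f - f(xhat) ∈ Q(g)^r_d`. -/
theorem stmt4 {n m : ℕ} (g : Fin m → MvPolynomial (Fin n) ℝ) (r d : ℕ)
    (hXne : (semiSetX g).Nonempty) (hXc : IsCompact (semiSetX g))
    (f : MvPolynomial (Fin n) ℝ) (hf : f.totalDegree ≤ d) :
    f ∈ Fcone g r d ↔
      ∃ xhat ∈ semiSetX g,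
        eval xhat f = vPOP g f ∧ f - C (eval xhat f) ∈ Qmod g r d := by
  constructor
  · rintro ⟨_, ℓ, _, v, _, _, hv, hQ⟩
    obtain ⟨x, hx, hxe⟩ := hXc.exists_sInf_image_eq hXne
      (f := fun x => eval x f) (MvPolynomial.continuous_eval f).continuousOn
    have hxv : eval x f = vPOP g f := hxe.symm
    refine ⟨x, hx, hxv, ?_⟩
    rw [hxv, ← hv]
    exact hQ
  · rintro ⟨x, hx, hxv, hQ⟩
    refine ⟨hf, (MvPolynomial.aeval x).toLinearMap, ?_, eval x f, ?_, ?_, hxv, hQ⟩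
    · rintro q ⟨_, s, hs, _, rfl⟩
      have hg : ∀ i, 0 ≤ eval x (gext g i) := by
        intro i
        refine Fin.cases ?_ (fun j => ?_) i
        · simp [gext]
        · simpa [gext] using hx j
      have h : 0 ≤ eval x (∑ i, s i * gext g i) := by
        rw [map_sum]
        refine Finset.sum_nonneg fun i _ => ?_
        rw [map_mul]
        refine mul_nonneg ?_ (hg i)
        obtain ⟨k, p, hp⟩ := hs i
        rw [hp, map_sum]
        refine Finset.sum_nonneg fun j _ => ?_
        rw [map_pow]
        exact sq_nonneg _
      simpa [MvPolynomial.aeval_eq_eval] using h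
    · simp
    · simp [MvPolynomial.aeval_eq_eval]
end

section
/- (Monotone embedding of exactness cones.) Assume X is nonempty and compact. Then for every relaxation order r, the exactness cones are monotonically embedded: F(g)^r_d ⊆ F(g)^{r+1}_d. -/
open MvPolynomial

/-- Monotone embedding of exactness cones: for `X` nonempty and compact,
`F(g)^r_d ⊆ F(g)^{r+1}_d` for every relaxation order `r`. -/
theorem stmt7 {n m : ℕ} (g : Fin m → MvPolynomial (Fin n) ℝ) (r d : ℕ)
    (hXne : (semiSetX g).Nonempty) (hXc : IsCompact (semiSetX g)) :
    Fcone g r d ⊆ Fcone g (r + 1) d := by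
  rintro f ⟨hfd, ℓ, hℓ, v, h1, hf, hv, hd, s, hs, hdeg, heq⟩
  obtain ⟨x, hx, hmin⟩ := hXc.exists_sInf_image_eq hXne
    (f := fun x => eval x f) (MvPolynomial.continuous_eval f).continuousOn
  refine ⟨hfd, (MvPolynomial.aeval x).toLinearMap, ?_, v, ?_, ?_, hv, hd, s, hs,
    fun i => (hdeg i).trans (by omega), heq⟩
  · rintro q ⟨-, t, ht, -, rfl⟩
    simp only [AlgHom.toLinearMap_apply, map_sum, map_mul]
    refine Finset.sum_nonneg fun i _ => mul_nonneg ?_ ?_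
    · obtain ⟨k, p, hp⟩ := ht i
      rw [hp]
      simp only [map_sum, map_pow]
      exact Finset.sum_nonneg fun j _ => sq_nonneg _
    · refine Fin.cases ?_ (fun j => ?_) i
      · simp [gext]
      · simpa [gext, MvPolynomial.aeval_eq_eval] using hx j
  · simp
  · rw [hv, vPOP, hmin]
    simp [MvPolynomial.aeval_eq_eval]
end

section
/- (Asymptotic exactness of the relaxation values.) Assume X is nonempty and the Archimedean condition holds: there exist R ∈ ℝ and r₀ ∈ ℕ such that R² − Σ_{k=1}^n x_k² ∈ Q(g)^{r₀}_2. Then for every f ∈ ℝ[x]_d and every ε > 0 there exists a relaxation order r such that f − (v(f) − ε) ∈ Q(g)^r_d; equivalently, sup_r v^r(f) = v(f). -/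
open MvPolynomial

/-- Quadratic modules as sets of polynomials. -/
structure IsQM {n : ℕ} (Q : Set (MvPolynomial (Fin n) ℝ)) : Prop where
  one : 1 ∈ Q
  add : ∀ {p q}, p ∈ Q → q ∈ Q → p + q ∈ Q
  sq : ∀ a {q}, q ∈ Q → a * a * q ∈ Q

namespace IsQM

variable {n : ℕ} {Q : Set (MvPolynomial (Fin n) ℝ)}

lemma zero (h : IsQM Q) : 0 ∈ Q := by simpa using h.sq 0 h.one

lemma square (h : IsQM Q) (a : MvPolynomial (Fin n) ℝ) : a * a ∈ Q := by
  simpa using h.sq a h.one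

lemma sos (h : IsQM Q) {t : MvPolynomial (Fin n) ℝ} (ht : IsSumSq t) :
    ∀ {q}, q ∈ Q → t * q ∈ Q := by
  induction ht with
  | zero => intro q _; simpa using h.zero
  | sq_add a _ ih =>
    intro q hq
    rw [add_mul]
    exact h.add (h.sq a hq) (ih hq)

lemma sosC {r : ℝ} (hr : 0 ≤ r) : IsSumSq (C r : MvPolynomial (Fin n) ℝ) := by
  have : (C r : MvPolynomial (Fin n) ℝ) = C (Real.sqrt r) * C (Real.sqrt r) := by
    rw [← C_mul, Real.mul_self_sqrt hr]
  rw [this]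
  exact IsSumSq.mul_self _

lemma smul (h : IsQM Q) {r : ℝ} (hr : 0 ≤ r) {q} (hq : q ∈ Q) : C r * q ∈ Q :=
  h.sos (sosC hr) hq

lemma const (h : IsQM Q) {r : ℝ} (hr : 0 ≤ r) : C r ∈ Q := by
  simpa using h.smul hr h.one

lemma of_smul (h : IsQM Q) {r : ℝ} (hr : 0 < r) {q} (hq : C r * q ∈ Q) : q ∈ Q := by
  have := h.smul (inv_nonneg.2 hr.le) hq
  rwa [← mul_assoc, ← C_mul, inv_mul_cancel₀ hr.ne', C_1, one_mul] at this

lemma mono (h : IsQM Q) {a} {r s : ℝ} (hrs : r ≤ s) (hq : C r + a ∈ Q) : C s + a ∈ Q := by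
  have := h.add (h.const (sub_nonneg.2 hrs)) hq
  have e : C (s - r) + (C r + a) = C s + a := by rw [C_sub]; ring
  rwa [e] at this

/-- Adjoining an element. -/
lemma adjoin (h : IsQM Q) (a : MvPolynomial (Fin n) ℝ) :
    IsQM {p | ∃ q ∈ Q, ∃ t, IsSumSq t ∧ p = q + t * a} where
  one := ⟨1, h.one, 0, IsSumSq.zero, by ring⟩
  add := by
    rintro _ _ ⟨q, hq, t, ht, rfl⟩ ⟨q', hq', t', ht', rfl⟩
    exact ⟨q + q', h.add hq hq', t + t', ht.add ht', by ring⟩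
  sq := by
    rintro b _ ⟨q, hq, t, ht, rfl⟩
    exact ⟨b * b * q, h.sq b hq, b * b * t, (IsSumSq.mul_self b).mul ht, by ring⟩

/-- Bounded elements form a subalgebra. -/
lemma bdd (h : IsQM Q) (hb : ∀ i, ∃ N : ℝ, 0 ≤ N ∧ C N - X i * X i ∈ Q)
    (p : MvPolynomial (Fin n) ℝ) : ∃ N : ℝ, 0 ≤ N ∧ C N - p * p ∈ Q := by
  have hmul : ∀ a b : MvPolynomial (Fin n) ℝ, (∃ N : ℝ, 0 ≤ N ∧ C N - a * a ∈ Q) →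
      (∃ N : ℝ, 0 ≤ N ∧ C N - b * b ∈ Q) → ∃ N : ℝ, 0 ≤ N ∧ C N - (a * b) * (a * b) ∈ Q := by
    rintro a b ⟨N, hN, ha⟩ ⟨N', hN', hb⟩
    refine ⟨N * N', mul_nonneg hN hN', ?_⟩
    have := h.add (h.sq b ha) (h.smul hN hb)
    convert this using 1
    rw [C_mul]; ring
  induction p using MvPolynomial.induction_on with
  | C r =>
    refine ⟨r * r, mul_self_nonneg r, ?_⟩
    rw [C_mul, sub_self]; exact h.zero
  | add p q hp hq =>
    obtain ⟨N, hN, ha⟩ := hp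
    obtain ⟨N', hN', hb⟩ := hq
    refine ⟨2 * N + 2 * N', by positivity, ?_⟩
    have := h.add (h.add (h.add ha ha) (h.add hb hb)) (h.square (p - q))
    convert this using 1
    rw [C_add, C_mul, C_mul]
    have : (C 2 : MvPolynomial (Fin n) ℝ) = 2 := map_ofNat C 2
    rw [this]; ring
  | mul_X p i hp => exact hmul p (X i) hp (hb i)

lemma ub (h : IsQM Q) (hb : ∀ i, ∃ N : ℝ, 0 ≤ N ∧ C N - X i * X i ∈ Q)
    (p : MvPolynomial (Fin n) ℝ) : ∃ N : ℝ, 0 < N ∧ C N - p ∈ Q := by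
  obtain ⟨N, hN, hp⟩ := h.bdd hb p
  refine ⟨(N + 1) / 2, by positivity, h.of_smul (r := 2) two_pos ?_⟩
  have := h.add hp (h.square (p - 1))
  convert this using 1
  rw [mul_sub, ← C_mul]
  have e : (2 : ℝ) * ((N + 1) / 2) = N + 1 := by ring
  have : (C 2 : MvPolynomial (Fin n) ℝ) = 2 := map_ofNat C 2
  rw [e, this, C_add, C_1]; ring

/-- `t f ∈ 1 + Q` implies `f ∈ Q`. -/
lemma trick (h : IsQM Q) (hb : ∀ i, ∃ N : ℝ, 0 ≤ N ∧ C N - X i * X i ∈ Q)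
    {f t : MvPolynomial (Fin n) ℝ} (ht : IsSumSq t) (hq : t * f - 1 ∈ Q) : f ∈ Q := by
  obtain ⟨N₁, hN₁, h₁⟩ := h.ub hb t
  obtain ⟨N₂, hN₂, h₂⟩ := h.ub hb (t * t * f)
  obtain ⟨N₃, hN₃, h₃⟩ := h.ub hb (-f)
  obtain ⟨k, hk⟩ : ∃ k : ℝ, k = N₁ + N₂ + 1 := ⟨_, rfl⟩
  have hk0 : 0 < k := by linarith
  have hkt : C (2 * k) + -t ∈ Q := h.mono (r := N₁) (by linarith) (by simpa [sub_eq_add_neg] using h₁)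
  have hkt2 : C (2 * k - 1) + -(t * t * f) ∈ Q :=
    h.mono (r := N₂) (by linarith) (by simpa [sub_eq_add_neg] using h₂)
  have c2 : (C 2 : MvPolynomial (Fin n) ℝ) = 2 := map_ofNat C 2
  have step : ∀ r : ℝ, 0 ≤ r → C r + f ∈ Q → C (r - (k * k)⁻¹) + f ∈ Q := by
    intro r hr hf
    have := h.add (h.add (h.add (h.sq (C k - t) hf) (h.smul (r := 2 * k) (by positivity) hq))
      (h.smul hr (h.sos ht hkt))) hkt2
    refine h.of_smul (r := k * k) (by positivity) ?_
    convert this using 1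
    have e : C (k * k) * C ((k * k)⁻¹) = (1 : MvPolynomial (Fin n) ℝ) := by
      rw [← C_mul, mul_inv_cancel₀ (by positivity), C_1]
    simp only [C_sub, C_mul, C_1, c2] at e ⊢
    linear_combination -e
  have key : ∀ j : ℕ, ∀ r : ℝ, r ≤ j * (k * k)⁻¹ → C r + f ∈ Q → f ∈ Q := by
    intro j
    induction j with
    | zero =>
      intro r hr hf
      simpa using h.mono (s := 0) (by simpa using hr) hf
    | succ j ih =>
      intro r hr hf
      by_cases h0 : 0 ≤ r
      · refine ih _ ?_ (step r h0 hf)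
        push_cast at hr
        linarith
      · simpa using h.mono (s := 0) (not_le.1 h0).le hf
  obtain ⟨j, hj⟩ := exists_nat_ge (N₃ * (k * k))
  refine key j N₃ ?_ (by simpa using h₃)
  rwa [← div_eq_mul_inv, le_div_iff₀ (by positivity)]

/-- Support elements are closed under multiplication. -/
lemma supp_mul (h : IsQM Q) {t : MvPolynomial (Fin n) ℝ} (h1 : t ∈ Q) (h2 : -t ∈ Q) (a) :
    t * a ∈ Q := by
  refine h.of_smul (r := 4) (by norm_num) ?_
  have := h.add (h.sq (a + 1) h1) (h.sq (a - 1) h2)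
  convert this using 1
  have : (C 4 : MvPolynomial (Fin n) ℝ) = 4 := map_ofNat C 4
  rw [this]; ring

lemma exists_max (h : IsQM Q) (h1 : -1 ∉ Q) :
    ∃ P : Set (MvPolynomial (Fin n) ℝ), Q ⊆ P ∧ IsQM P ∧ -1 ∉ P ∧ ∀ a, a ∈ P ∨ -a ∈ P := by
  obtain ⟨P, hQP, hP⟩ := zorn_subset_nonempty
    {P : Set (MvPolynomial (Fin n) ℝ) | IsQM P ∧ -1 ∉ P} (by
      intro c hc hch hne
      refine ⟨⋃₀ c, ⟨⟨?_, ?_, ?_⟩, ?_⟩, fun s hs => Set.subset_sUnion_of_mem hs⟩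
      · obtain ⟨s, hs⟩ := hne
        exact ⟨s, hs, (hc hs).1.one⟩
      · rintro p q ⟨s, hs, hp⟩ ⟨s', hs', hq⟩
        rcases hch.total hs hs' with hl | hl
        · exact ⟨s', hs', (hc hs').1.add (hl hp) hq⟩
        · exact ⟨s, hs, (hc hs).1.add hp (hl hq)⟩
      · rintro a q ⟨s, hs, hq⟩
        exact ⟨s, hs, (hc hs).1.sq a hq⟩
      · rintro ⟨s, hs, hq⟩
        exact (hc hs).2 hq) Q ⟨h, h1⟩
  obtain ⟨hPQ, hP1⟩ := hP.prop
  refine ⟨P, hQP, hPQ, hP1, ?_⟩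
  have adj : ∀ a, a ∉ P → ∃ q ∈ P, ∃ t, IsSumSq t ∧ -1 = q + t * a := by
    intro a ha
    by_contra hcon
    have hle : P ⊆ {p | ∃ q ∈ P, ∃ t, IsSumSq t ∧ p = q + t * a} :=
      fun p hp => ⟨p, hp, 0, IsSumSq.zero, by ring⟩
    have := hP.le_of_ge (y := {p | ∃ q ∈ P, ∃ t, IsSumSq t ∧ p = q + t * a})
      ⟨hPQ.adjoin a, hcon⟩ hle
    exact ha (this ⟨0, hPQ.zero, 1, by simpa using IsSumSq.mul_self (1 : MvPolynomial (Fin n) ℝ), by ring⟩)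
  intro a
  by_contra! hcon
  obtain ⟨q₁, hq₁, t₁, ht₁, e₁⟩ := adj a hcon.1
  obtain ⟨q₂, hq₂, t₂, ht₂, e₂⟩ := adj (-a) hcon.2
  have m1 : t₁ ∈ P := by simpa using hPQ.sos ht₁ hPQ.one
  have m2 : t₂ ∈ P := by simpa using hPQ.sos ht₂ hPQ.one
  have m1' : -t₁ ∈ P := by
    have := hPQ.add (hPQ.add m2 (hPQ.sos ht₁ hq₂)) (hPQ.sos ht₂ hq₁)
    convert this using 1
    linear_combination t₁ * e₂ + t₂ * e₁
  apply hP1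
  rw [e₁]
  exact hPQ.add hq₁ (hPQ.supp_mul m1 m1' a)

lemma not_neg (h : IsQM Q) (h1 : -1 ∉ Q) {r : ℝ} (hr : C r ∈ Q) : 0 ≤ r := by
  by_contra! hlt
  apply h1
  refine h.of_smul (r := -r) (by linarith) ?_
  simpa using hr

/-- A total archimedean quadratic module is nonnegative at some point. -/
lemma exists_point (h : IsQM Q) (hb : ∀ i, ∃ N : ℝ, 0 ≤ N ∧ C N - X i * X i ∈ Q)
    (h1 : -1 ∉ Q) (htot : ∀ a, a ∈ Q ∨ -a ∈ Q) :
    ∃ x : Fin n → ℝ, ∀ p ∈ Q, 0 ≤ eval x p := by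
  have c2 : (C 2 : MvPolynomial (Fin n) ℝ) = 2 := map_ofNat C 2
  have hpt : ∀ i : Fin n, ∃ α : ℝ, ∀ ε : ℝ, 0 < ε →
      C (ε * ε) - (X i - C α) * (X i - C α) ∈ Q := by
    intro i
    obtain ⟨N, hN, hNi⟩ := h.ub hb (X i)
    obtain ⟨N', hN', hNi'⟩ := h.ub hb (-X i)
    have hbd : BddBelow {r : ℝ | C r - X i ∈ Q} := by
      refine ⟨-N', fun r hr => ?_⟩
      have := h.not_neg h1 (r := r + N') (by
        convert h.add hr hNi' using 1
        rw [C_add]; ring)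
      linarith
    refine ⟨sInf {r : ℝ | C r - X i ∈ Q}, fun ε hε => ?_⟩
    set α := sInf {r : ℝ | C r - X i ∈ Q} with hα
    have hu : C ε - (X i - C α) ∈ Q := by
      obtain ⟨r, hr, hlt⟩ := exists_lt_of_csInf_lt (s := {r : ℝ | C r - X i ∈ Q}) ⟨N, hNi⟩
        (show sInf {r : ℝ | C r - X i ∈ Q} < α + ε by linarith)
      have hr' : C r + -X i ∈ Q := by simpa [sub_eq_add_neg] using hr
      convert h.mono hlt.le hr' using 1
      rw [C_add]; ring
    have hl : C ε + (X i - C α) ∈ Q := by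
      rcases htot (C (α - ε) - X i) with hh | hh
      · have := csInf_le hbd hh
        linarith
      · convert hh using 1
        rw [C_sub]; ring
    refine h.of_smul (r := 2 * ε) (by positivity) ?_
    convert h.add (h.sq (C ε + (X i - C α)) hu) (h.sq (C ε - (X i - C α)) hl) using 1
    simp only [C_mul, c2]; ring
  choose x hx using hpt
  have inf : ∀ p : MvPolynomial (Fin n) ℝ, ∀ ε : ℝ, 0 < ε →
      C ε - (p - C (eval x p)) * (p - C (eval x p)) ∈ Q := by
    have hadd : ∀ a b : MvPolynomial (Fin n) ℝ, (∀ ε : ℝ, 0 < ε → C ε - a * a ∈ Q) →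
        (∀ ε : ℝ, 0 < ε → C ε - b * b ∈ Q) → ∀ ε : ℝ, 0 < ε → C ε - (a + b) * (a + b) ∈ Q := by
      intro a b ha hb ε hε
      have ha := ha (ε / 4) (by positivity)
      have hb := hb (ε / 4) (by positivity)
      convert h.add (h.add (h.add ha ha) (h.add hb hb)) (h.square (a - b)) using 1
      have : (C ε : MvPolynomial (Fin n) ℝ) = C (ε / 4) + C (ε / 4) + C (ε / 4) + C (ε / 4) := by
        simp only [← C_add]; congr 1; ring
      rw [this]; ring
    have hmul : ∀ a b : MvPolynomial (Fin n) ℝ, (∀ ε : ℝ, 0 < ε → C ε - a * a ∈ Q) →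
        ∀ ε : ℝ, 0 < ε → C ε - (a * b) * (a * b) ∈ Q := by
      intro a b ha ε hε
      obtain ⟨B, hB, hBb⟩ := h.bdd hb b
      have hB1 : C (B + 1) + -(b * b) ∈ Q :=
        h.mono (r := B) (by linarith) (by simpa [sub_eq_add_neg] using hBb)
      have hd : 0 < ε / (B + 1) := by positivity
      convert h.add (h.sq b (ha _ hd)) (h.smul hd.le hB1) using 1
      have : (C ε : MvPolynomial (Fin n) ℝ) = C (ε / (B + 1)) * C (B + 1) := by
        rw [← C_mul]; congr 1; field_simp
      rw [this]; ring
    intro p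
    induction p using MvPolynomial.induction_on with
    | C r => intro ε hε; simpa using h.const hε.le
    | add p q hp hq =>
      intro ε hε
      have := hadd _ _ hp hq ε hε
      convert this using 2
      simp only [map_add]; ring
    | mul_X p i hp =>
      have hi : ∀ ε : ℝ, 0 < ε → C ε - (X i - C (x i)) * (X i - C (x i)) ∈ Q := by
        intro ε hε
        have := hx i (Real.sqrt ε) (Real.sqrt_pos.2 hε)
        rwa [Real.mul_self_sqrt hε.le] at this
      intro ε hε
      have := hadd _ _ (hmul _ (X i) hp) (hmul _ (C (eval x p)) hi) ε hε
      convert this using 2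
      simp only [map_mul, eval_X]; ring
  refine ⟨x, fun p hp => ?_⟩
  by_contra! hlt
  obtain ⟨e, he⟩ : ∃ e : ℝ, e = -(eval x p) := ⟨_, rfl⟩
  have he0 : 0 < e := by linarith
  have hi := inf p (e * e / 2) (by positivity)
  have hev : eval x p = -e := by linarith
  rw [hev] at hi
  -- e^2/2 - (p+e)^2 + p^2 + 2 e p = -e^2/2
  have h3 := h.add (h.add hi (h.square p)) (h.smul (r := 2 * e) (by positivity) hp)
  have : 0 ≤ -(e * e / 2) := by
    refine h.not_neg h1 ?_
    convert h3 using 1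
    have : (C (-(e * e / 2)) : MvPolynomial (Fin n) ℝ) = C (e * e / 2) - C e * C e := by
      rw [← C_mul, ← C_sub]; congr 1; ring
    rw [this]
    simp only [C_mul, C_neg, c2]; ring
  nlinarith [mul_pos he0 he0]

/-- Positivstellensatz for archimedean quadratic modules. -/
lemma exists_point_of_notMem (h : IsQM Q) (hb : ∀ i, ∃ N : ℝ, 0 ≤ N ∧ C N - X i * X i ∈ Q)
    {f : MvPolynomial (Fin n) ℝ} (hf : f ∉ Q) :
    ∃ x : Fin n → ℝ, (∀ p ∈ Q, 0 ≤ eval x p) ∧ eval x f ≤ 0 := by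
  have hn : -1 ∉ {p | ∃ q ∈ Q, ∃ t, IsSumSq t ∧ p = q + t * (-f)} := by
    rintro ⟨q, hq, t, ht, e⟩
    refine hf (h.trick hb ht ?_)
    convert hq using 1
    linear_combination e
  obtain ⟨P, hle, hP, hP1, htot⟩ := (h.adjoin (-f)).exists_max hn
  have hQP : Q ⊆ P := fun p hp => hle ⟨p, hp, 0, IsSumSq.zero, by ring⟩
  have hfP : -f ∈ P := hle ⟨0, h.zero, 1,
    by simpa using IsSumSq.mul_self (1 : MvPolynomial (Fin n) ℝ), by ring⟩
  obtain ⟨x, hx⟩ := hP.exists_point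
    (fun i => (hb i).imp fun N hN => ⟨hN.1, hQP hN.2⟩) hP1 htot
  refine ⟨x, fun p hp => hx p (hQP hp), ?_⟩
  have := hx _ hfP
  rw [map_neg] at this
  linarith

end IsQM

lemma isSOS_of_isSumSq {n : ℕ} {p : MvPolynomial (Fin n) ℝ} (h : IsSumSq p) : IsSOS p := by
  induction h with
  | zero => exact ⟨0, fun _ => 0, by simp⟩
  | sq_add a _ ih =>
    obtain ⟨k, q, rfl⟩ := ih
    exact ⟨k + 1, Fin.cons a q, by simp [Fin.sum_univ_succ, sq]⟩

lemma isSumSq_of_isSOS {n : ℕ} {p : MvPolynomial (Fin n) ℝ} (h : IsSOS p) : IsSumSq p := by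
  obtain ⟨k, q, rfl⟩ := h
  refine Finset.sum_induction _ IsSumSq (fun _ _ => IsSumSq.add) IsSumSq.zero ?_
  intro i _
  rw [sq]
  exact IsSumSq.mul_self _

/-- The full quadratic module. -/
def fullQ {n m : ℕ} (g : Fin m → MvPolynomial (Fin n) ℝ) : Set (MvPolynomial (Fin n) ℝ) :=
  {p | ∃ s : Fin (m + 1) → MvPolynomial (Fin n) ℝ,
    (∀ i, IsSumSq (s i)) ∧ p = ∑ i, s i * gext g i}

lemma gext_mem_fullQ {n m : ℕ} (g : Fin m → MvPolynomial (Fin n) ℝ) (j : Fin (m + 1)) :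
    gext g j ∈ fullQ g := by
  refine ⟨fun i => if i = j then 1 else 0, fun i => ?_, by simp⟩
  dsimp only
  split_ifs
  · simpa using IsSumSq.mul_self (1 : MvPolynomial (Fin n) ℝ)
  · exact IsSumSq.zero

lemma isQM_fullQ {n m : ℕ} (g : Fin m → MvPolynomial (Fin n) ℝ) : IsQM (fullQ g) where
  one := gext_mem_fullQ g 0
  add := by
    rintro _ _ ⟨s, hs, rfl⟩ ⟨s', hs', rfl⟩
    exact ⟨fun i => s i + s' i, fun i => (hs i).add (hs' i), by
      simp only [add_mul, Finset.sum_add_distrib]⟩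
  sq := by
    rintro a _ ⟨s, hs, rfl⟩
    exact ⟨fun i => a * a * s i, fun i => (IsSumSq.mul_self a).mul (hs i), by
      rw [Finset.mul_sum]; exact Finset.sum_congr rfl fun i _ => by ring⟩

lemma fullQ_nonneg {n m : ℕ} (g : Fin m → MvPolynomial (Fin n) ℝ) {p} (hp : p ∈ fullQ g)
    {x : Fin n → ℝ} (hx : x ∈ semiSetX g) : 0 ≤ eval x p := by
  obtain ⟨s, hs, rfl⟩ := hp
  rw [map_sum]
  refine Finset.sum_nonneg fun i _ => ?_
  rw [map_mul]
  refine mul_nonneg ?_ ?_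
  · obtain ⟨k, q, e⟩ := isSOS_of_isSumSq (hs i)
    rw [e, map_sum]
    exact Finset.sum_nonneg fun j _ => by rw [map_pow]; positivity
  · refine Fin.cases ?_ (fun j => ?_) i
    · simp [gext]
    · simpa [gext] using hx j

/-- Asymptotic exactness: if `X` is nonempty and the Archimedean
condition holds (`R² - Σ_k x_k² ∈ Q(g)^{r₀}_2` for some `R` and `r₀`), then for every
`f ∈ ℝ[x]_d` and every `ε > 0` there is a relaxation order `r` such that
`f - (v(f) - ε) ∈ Q(g)^r_d`. -/
theorem stmt8 {n m : ℕ} (g : Fin m → MvPolynomial (Fin n) ℝ) (d : ℕ)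
    (hX : (semiSetX g).Nonempty)
    (hArch : ∃ (R : ℝ) (r₀ : ℕ),
      C (R ^ 2) - ∑ k : Fin n, (X k : MvPolynomial (Fin n) ℝ) ^ 2 ∈ Qmod g r₀ 2)
    (f : MvPolynomial (Fin n) ℝ) (hf : f.totalDegree ≤ d)
    (ε : ℝ) (hε : 0 < ε) :
    ∃ r : ℕ, f - C (vPOP g f - ε) ∈ Qmod g r d := by
  obtain ⟨R, r₀, -, s₀, hs₀, -, e₀⟩ := hArch
  have hQ := isQM_fullQ g
  have hA : C (R ^ 2) - ∑ k : Fin n, (X k : MvPolynomial (Fin n) ℝ) ^ 2 ∈ fullQ g :=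
    ⟨s₀, fun i => isSumSq_of_isSOS (hs₀ i), e₀⟩
  have hb : ∀ i, ∃ N : ℝ, 0 ≤ N ∧ C N - X i * X i ∈ fullQ g := by
    intro i
    refine ⟨R ^ 2, sq_nonneg R, ?_⟩
    have hsum : ∑ k ∈ Finset.univ.erase i, (X k : MvPolynomial (Fin n) ℝ) ^ 2 ∈ fullQ g :=
      Finset.sum_induction _ (· ∈ fullQ g) (fun _ _ => hQ.add) hQ.zero
        (fun k _ => by rw [sq]; exact hQ.square _)
    convert hQ.add hA hsum using 1
    rw [← Finset.add_sum_erase _ _ (Finset.mem_univ i)]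
    ring
  have hmem : f - C (vPOP g f - ε) ∈ fullQ g := by
    by_contra hcon
    obtain ⟨x, hx, hfx⟩ := hQ.exists_point_of_notMem hb hcon
    have hxX : x ∈ semiSetX g := fun i => by
      simpa [gext] using hx _ (gext_mem_fullQ g i.succ)
    obtain ⟨N, -, hN⟩ := hQ.ub hb (-f)
    have hbd : BddBelow ((fun x => eval x f) '' semiSetX g) := by
      refine ⟨-N, ?_⟩
      rintro _ ⟨y, hy, rfl⟩
      have := fullQ_nonneg g hN hy
      simp only [map_sub, map_neg, eval_C] at this
      dsimp only
      linarith
    have hv : vPOP g f ≤ eval x f := csInf_le hbd ⟨x, hxX, rfl⟩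
    simp only [map_sub, eval_C] at hfx
    linarith
  obtain ⟨s, hs, e⟩ := hmem
  refine ⟨Finset.univ.sup fun i => (s i * gext g i).totalDegree, ?_, s,
    fun i => isSOS_of_isSumSq (hs i), fun i => ?_, e⟩
  · exact (totalDegree_sub _ _).trans (by rw [totalDegree_C]; simpa using hf)
  · have := Finset.le_sup (f := fun i => (s i * gext g i).totalDegree) (Finset.mem_univ i)
    omega
end

section
/- (Normal cone lemma.) Let x̂ ∈ X and assume that Q(g)^r_d is a closed subset of the finite-dimensional space ℝ[x]_d. Then the following two sets of polynomials coincide: {f ∈ ℝ[x]_d : f ∈ Q(g)^r_d and f(x̂) = 0} = {f ∈ ℝ[x]_d : ℓ(f) ≥ f(x̂) for every ℓ ∈ R(g)^r_d}; i.e., S_x̂(g)^r_d equals the negative of the normal cone to the moment relaxation R(g)^r_d at the evaluation functional at x̂. -/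
open MvPolynomial

theorem isSOS_zero {n : ℕ} : IsSOS (0 : MvPolynomial (Fin n) ℝ) :=
  ⟨0, Fin.elim0, by simp⟩

theorem IsSOS.add {n : ℕ} {p q : MvPolynomial (Fin n) ℝ} (hp : IsSOS p) (hq : IsSOS q) :
    IsSOS (p + q) := by
  obtain ⟨k, a, rfl⟩ := hp
  obtain ⟨l, b, rfl⟩ := hq
  refine ⟨k + l, Fin.append a b, ?_⟩
  simp [Fin.sum_univ_add]

theorem IsSOS.smul {n : ℕ} {p : MvPolynomial (Fin n) ℝ} (hp : IsSOS p) {c : ℝ} (hc : 0 ≤ c) :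
    IsSOS (c • p) := by
  obtain ⟨k, a, rfl⟩ := hp
  refine ⟨k, fun i => Real.sqrt c • a i, ?_⟩
  simp [Finset.smul_sum, smul_pow, Real.sq_sqrt hc]

theorem IsSOS.eval_nonneg {n : ℕ} {p : MvPolynomial (Fin n) ℝ} (hp : IsSOS p)
    (x : Fin n → ℝ) : 0 ≤ eval x p := by
  obtain ⟨k, a, rfl⟩ := hp
  rw [map_sum]
  refine Finset.sum_nonneg fun i _ => ?_
  rw [map_pow]
  positivity

theorem Qmod_zero {n m : ℕ} (g : Fin m → MvPolynomial (Fin n) ℝ) (r d : ℕ) :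
    0 ∈ Qmod g r d :=
  ⟨by simp, fun _ => 0, fun _ => isSOS_zero, by simp, by simp⟩

theorem Qmod_add {n m : ℕ} {g : Fin m → MvPolynomial (Fin n) ℝ} {r d : ℕ}
    {p q : MvPolynomial (Fin n) ℝ} (hp : p ∈ Qmod g r d) (hq : q ∈ Qmod g r d) :
    p + q ∈ Qmod g r d := by
  obtain ⟨hpd, s, hs, hsd, hps⟩ := hp
  obtain ⟨hqd, t, ht, htd, hqt⟩ := hq
  refine ⟨(totalDegree_add _ _).trans (max_le hpd hqd), fun i => s i + t i,
    fun i => (hs i).add (ht i), fun i => ?_, ?_⟩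
  · rw [add_mul]
    exact (totalDegree_add _ _).trans (max_le (hsd i) (htd i))
  · simp only [add_mul, Finset.sum_add_distrib]
    rw [hps, hqt]

theorem Qmod_smul {n m : ℕ} {g : Fin m → MvPolynomial (Fin n) ℝ} {r d : ℕ}
    {p : MvPolynomial (Fin n) ℝ} (hp : p ∈ Qmod g r d) {c : ℝ} (hc : 0 ≤ c) :
    c • p ∈ Qmod g r d := by
  obtain ⟨hpd, s, hs, hsd, hps⟩ := hp
  refine ⟨(totalDegree_smul_le _ _).trans hpd, fun i => c • s i,
    fun i => (hs i).smul hc, fun i => ?_, ?_⟩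
  · rw [smul_mul_assoc]
    exact (totalDegree_smul_le _ _).trans (hsd i)
  · simp only [smul_mul_assoc, ← Finset.smul_sum]
    rw [hps]

theorem Qmod_eval_nonneg {n m : ℕ} {g : Fin m → MvPolynomial (Fin n) ℝ} {r d : ℕ}
    {p : MvPolynomial (Fin n) ℝ} (hp : p ∈ Qmod g r d) {x : Fin n → ℝ}
    (hx : x ∈ semiSetX g) : 0 ≤ eval x p := by
  obtain ⟨-, s, hs, -, rfl⟩ := hp
  rw [map_sum]
  refine Finset.sum_nonneg fun i _ => ?_
  rw [map_mul]
  refine mul_nonneg ((hs i).eval_nonneg x) ?_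
  refine Fin.cases ?_ (fun j => ?_) i
  · simp [gext]
  · simpa [gext] using hx j

/-- Normal cone lemma: let `xhat ∈ X` and assume `Q(g)^r_d` is a closed
subset of the finite-dimensional space `ℝ[x]_d` (closedness is expressed through a linear
coordinate identification `e` of `ℝ[x]_d` with `ℝ^N`; this does not depend on the choice
of `e`). Then `S_xhat(g)^r_d = {f ∈ Q(g)^r_d : f(xhat) = 0}` coincides with the set
`{f ∈ ℝ[x]_d : ℓ(f) ≥ f(xhat) for all ℓ ∈ R(g)^r_d}`, i.e. with the negative of the
normal cone to `R(g)^r_d` at the evaluation functional at `xhat`. -/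
theorem stmt10 {n m : ℕ} (g : Fin m → MvPolynomial (Fin n) ℝ) (r d : ℕ)
    (xhat : Fin n → ℝ) (hxhat : xhat ∈ semiSetX g)
    (N : ℕ)
    (e : MvPolynomial.restrictTotalDegree (Fin n) ℝ d ≃ₗ[ℝ] (Fin N → ℝ))
    (hclosed : IsClosed
      (⇑e '' {p : MvPolynomial.restrictTotalDegree (Fin n) ℝ d |
        (p : MvPolynomial (Fin n) ℝ) ∈ Qmod g r d})) :
    {f | f ∈ Qmod g r d ∧ eval xhat f = 0}
      = {f : MvPolynomial (Fin n) ℝ |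
          f.totalDegree ≤ d ∧ ∀ ℓ ∈ Rmom g r d, eval xhat f ≤ ℓ f} := by
  ext f
  simp only [Set.mem_ofPred_eq]
  constructor
  · rintro ⟨hf, h0⟩
    exact ⟨hf.1, fun ℓ hℓ => by rw [h0]; exact hℓ f hf⟩
  · rintro ⟨hfd, hf⟩
    have h1 : eval xhat f ≤ 0 := by
      simpa using hf 0 (fun q _ => by simp)
    have h2 : 0 ≤ eval xhat f := by
      have := hf ((2 : ℝ) • (aeval xhat : MvPolynomial (Fin n) ℝ →ₐ[ℝ] ℝ).toLinearMap
        ) (fun q hq => by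
          have := Qmod_eval_nonneg hq hxhat
          simpa [aeval_eq_eval] using this)
      simp [aeval_eq_eval] at this
      linarith
    have h0 : eval xhat f = 0 := le_antisymm h1 h2
    refine ⟨?_, h0⟩
    by_contra hfQ
    set K : Set (Fin N → ℝ) := ⇑e '' {p : MvPolynomial.restrictTotalDegree (Fin n) ℝ d |
        (p : MvPolynomial (Fin n) ℝ) ∈ Qmod g r d} with hK
    have hconv : Convex ℝ K := by
      rintro _ ⟨p, hp, rfl⟩ _ ⟨q, hq, rfl⟩ a b ha hb -
      refine ⟨a • p + b • q, ?_, by simp⟩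
      exact Qmod_add (Qmod_smul hp ha) (Qmod_smul hq hb)
    let F : MvPolynomial.restrictTotalDegree (Fin n) ℝ d :=
      ⟨f, (mem_restrictTotalDegree _ _ _).2 hfd⟩
    have hFK : e F ∉ K := by
      rintro ⟨p, hp, hpe⟩
      have hpF := e.injective hpe
      subst hpF
      exact hfQ hp
    obtain ⟨u, s, hu, hs⟩ := geometric_hahn_banach_closed_point hconv hclosed hFK
    have hs0 : 0 < s := by
      have := hu 0 ⟨0, Qmod_zero g r d, by simp⟩
      simpa using this
    have hneg : ∀ a ∈ K, u a ≤ 0 := by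
      rintro _ ⟨p, hp, rfl⟩
      by_contra! hpos
      have := hu (e ((s / u (e p)) • p))
        ⟨_, Qmod_smul hp (div_nonneg hs0.le hpos.le), rfl⟩
      rw [map_smul, map_smul, smul_eq_mul, div_mul_cancel₀ _ hpos.ne'] at this
      exact lt_irrefl _ this
    obtain ⟨ℓ, hℓ⟩ := LinearMap.exists_extend
      (-((u : (Fin N → ℝ) →ₗ[ℝ] ℝ) ∘ₗ e.toLinearMap))
    have hℓ' : ∀ p : MvPolynomial.restrictTotalDegree (Fin n) ℝ d,
        ℓ (p : MvPolynomial (Fin n) ℝ) = - u (e p) := fun p => by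
      have := LinearMap.congr_fun hℓ p
      simpa using this
    have h3 := hf ℓ (fun q hq => by
      have := hℓ' ⟨q, (mem_restrictTotalDegree _ _ _).2 hq.1⟩
      have h4 := hneg _ ⟨⟨q, (mem_restrictTotalDegree _ _ _).2 hq.1⟩, hq, rfl⟩
      simp only at this
      rw [this]
      linarith)
    have h5 := hℓ' F
    simp only [F] at h5 hs
    rw [h0, h5] at h3
    linarith
end
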